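/- For all nonnegative integers n, r, s, the number of partitions π of n with exactly r odd parts whose conjugate π′ has exactly s odd parts equals the number of triples (ν, σ, τ) where ν is a partition into parts divisible by 4, σ is a partition into parts congruent to 2 modulo 4, τ is a partition into odd parts, the sizes of ν, σ, τ sum to n, τ has exactly s parts, and twice the number of parts of σ plus the number of distinct integers occurring in τ with odd multiplicity equals r. -/

import Mathlib

/-- A partition, modeled as a nonincreasing function `ℕ → ℕ` with only finitely many
nonzero terms. -/
def IsPartitionFun (f : ℕ → ℕ) : Prop :=
  (∀ i j, i ≤ j → f j ≤ f i) ∧ ∃ N, ∀ i, N ≤ i → f i = 0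

/-- The sum of the parts of a partition. -/
noncomputable def partSum (f : ℕ → ℕ) : ℕ := ∑' i, f i

/-- `𝒪(f)`: the number of odd parts of the partition `f`. -/
noncomputable def oddParts (f : ℕ → ℕ) : ℕ := {i | Odd (f i)}.ncard

/-- `l(f)`: the number of parts of the partition `f`. -/
noncomputable def numParts (f : ℕ → ℕ) : ℕ := {i | 0 < f i}.ncard

/-- The conjugate partition: its zero-based `i`-th term is the number of parts
that are at least `i+1`. -/
noncomputable def conjFun (f : ℕ → ℕ) : ℕ → ℕ := fun i => {j | i + 1 ≤ f j}.ncard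

/-- The multiplicity of `k` as a part of `f`. -/
noncomputable def multiplicity' (f : ℕ → ℕ) (k : ℕ) : ℕ := {i | f i = k}.ncard

theorem aux_ncard (P : ℕ → Prop) [DecidablePred P] (N : ℕ) (h : ∀ i, N ≤ i → ¬ P i) :
    {i | P i}.ncard = ∑ i ∈ Finset.range N, if P i then 1 else 0 := by
  have : {i | P i} = ((Finset.range N).filter P : Finset ℕ) := by
    ext i
    simp only [Set.mem_ofPred_eq, Finset.coe_filter, Finset.mem_range]
    constructor
    · intro hi
      refine ⟨?_, hi⟩
      by_contra hc
      exact h i (by omega) hi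
    · exact fun hi => hi.2
  rw [this, Set.ncard_coe_finset, Finset.card_filter]

theorem aux_tsum (f : ℕ → ℕ) (N : ℕ) (h : ∀ i, N ≤ i → f i = 0) :
    ∑' i, f i = ∑ i ∈ Finset.range N, f i := by
  apply tsum_eq_sum
  intro i hi
  exact h i (by simpa using hi)

theorem aux_pairs (f : ℕ → ℕ) (N : ℕ) :
    ∑ i ∈ Finset.range (2 * N), f i = ∑ i ∈ Finset.range N, (f (2 * i) + f (2 * i + 1)) := by
  induction N with
  | zero => simp
  | succ n ih =>
    rw [show 2 * (n + 1) = 2 * n + 1 + 1 by ring, Finset.sum_range_succ, Finset.sum_range_succ, ih,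
      Finset.sum_range_succ]
    ring

theorem lt_conj {f : ℕ → ℕ} (hf : IsPartitionFun f) (i j : ℕ) : j < conjFun f i ↔ i < f j := by
  obtain ⟨hm, N, hN⟩ := hf
  have hex : ∃ n, f n ≤ i := ⟨N, by simp [hN N le_rfl]⟩
  classical
  have : {j | i + 1 ≤ f j} = (Finset.range (Nat.find hex) : Finset ℕ) := by
    ext j
    simp only [Set.mem_ofPred_eq, Finset.coe_range, Set.mem_Iio, Nat.lt_find_iff]
    constructor
    · intro h m hmj
      have := hm m j hmj
      omega
    · intro h
      have := h j le_rfl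
      omega
  have h2 : conjFun f i = Nat.find hex := by
    unfold conjFun
    rw [this, Set.ncard_coe_finset, Finset.card_range]
  rw [h2, Nat.lt_find_iff]
  constructor
  · intro h
    have := h j le_rfl
    omega
  · intro h m hmj
    have := hm m j hmj
    omega

theorem conj_part {f : ℕ → ℕ} (hf : IsPartitionFun f) : IsPartitionFun (conjFun f) := by
  refine ⟨fun i j hij => ?_, f 0, fun i hi => ?_⟩
  · by_contra hc
    have h1 := (lt_conj hf j (conjFun f i)).1 (by omega)
    have h2 := (lt_conj hf i (conjFun f i)).2 (by omega)
    omega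
  · by_contra hc
    have := (lt_conj hf i 0).1 (by omega)
    omega

theorem conj_conj {f : ℕ → ℕ} (hf : IsPartitionFun f) : conjFun (conjFun f) = f := by
  funext i
  have h : ∀ j, j < conjFun (conjFun f) i ↔ j < f i := fun j => by
    rw [lt_conj (conj_part hf), lt_conj hf]
  have h1 := h (f i)
  have h2 := h (conjFun (conjFun f) i)
  omega

theorem mult_eq {f : ℕ → ℕ} (hf : IsPartitionFun f) (k : ℕ) :
    conjFun f k = multiplicity' f (k + 1) + conjFun f (k + 1) := by
  have : {i | f i = k + 1} = (Finset.Ico (conjFun f (k + 1)) (conjFun f k) : Finset ℕ) := by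
    ext i
    have h1 := lt_conj hf k i
    have h2 := lt_conj hf (k + 1) i
    simp only [Set.mem_ofPred_eq, Finset.coe_Ico, Set.mem_Ico]
    omega
  have h3 := (conj_part hf).1 k (k + 1) (by omega)
  unfold multiplicity'
  rw [this, Set.ncard_coe_finset, Nat.card_Ico]
  omega

theorem mult_zero {f : ℕ → ℕ} (hf : IsPartitionFun f) (k : ℕ) (hk : f 0 ≤ k) :
    multiplicity' f (k + 1) = 0 := by
  have h1 := mult_eq hf k
  have h2 := lt_conj hf k 0
  omega

theorem mult_of_none {f : ℕ → ℕ} (k : ℕ) (hk : ∀ i, f i ≠ k) :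
    multiplicity' f k = 0 := by
  unfold multiplicity'
  simp [hk]

/-- tail-determined functions agree -/
theorem tail_unique (g h m : ℕ → ℕ) (hg : ∃ N, ∀ i, N ≤ i → g i = 0)
    (hh : ∃ N, ∀ i, N ≤ i → h i = 0)
    (eg : ∀ k, g k = m k + g (k + 1)) (eh : ∀ k, h k = m k + h (k + 1)) : g = h := by
  obtain ⟨N, hN⟩ := hg
  obtain ⟨M, hM⟩ := hh
  have key : ∀ d i, N + M ≤ i + d → g i = h i := by
    intro d
    induction d with
    | zero => intro i hi; rw [hN i (by omega), hM i (by omega)]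
    | succ d ih => intro i hi; rw [eg, eh, ih (i + 1) (by omega)]
  funext i
  exact key (N + M) i (by omega)

theorem part_ext {f g : ℕ → ℕ} (hf : IsPartitionFun f) (hg : IsPartitionFun g)
    (h : ∀ k, multiplicity' f (k + 1) = multiplicity' g (k + 1)) : f = g := by
  have : conjFun f = conjFun g := by
    apply tail_unique _ _ (fun k => multiplicity' f (k + 1)) (conj_part hf).2 (conj_part hg).2
    · exact mult_eq hf
    · intro k
      rw [mult_eq hg k, h]
  rw [← conj_conj hf, this, conj_conj hg]

noncomputable def tl (m : ℕ → ℕ) (i : ℕ) : ℕ := ∑' j, m (j + i)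

theorem tl_zero {m : ℕ → ℕ} {N : ℕ} (h : ∀ i, N ≤ i → m i = 0) (i : ℕ) (hi : N ≤ i) :
    tl m i = 0 := by
  unfold tl
  rw [aux_tsum _ 0 (fun j _ => h _ (by omega))]
  simp

theorem tl_succ {m : ℕ → ℕ} (h : ∃ N, ∀ i, N ≤ i → m i = 0) (i : ℕ) :
    tl m i = m i + tl m (i + 1) := by
  obtain ⟨N, hN⟩ := h
  unfold tl
  rw [aux_tsum _ (N + 1) (fun j _ => hN _ (by omega)), aux_tsum _ N (fun j _ => hN _ (by omega)),
    Finset.sum_range_succ']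
  simp only [Nat.zero_add]
  rw [add_comm]
  congr 1
  apply Finset.sum_congr rfl
  intro j _
  congr 1
  ring

theorem part_of_succ {f : ℕ → ℕ} (h : ∀ i, f (i + 1) ≤ f i) (h2 : ∃ N, ∀ i, N ≤ i → f i = 0) :
    IsPartitionFun f :=
  ⟨fun _ _ hij => antitone_nat_of_succ_le h hij, h2⟩

theorem tl_part {m : ℕ → ℕ} (h : ∃ N, ∀ i, N ≤ i → m i = 0) : IsPartitionFun (tl m) := by
  apply part_of_succ
  · intro i
    have := tl_succ h i
    omega
  · obtain ⟨N, hN⟩ := h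
    exact ⟨N, tl_zero hN⟩

noncomputable def mkp (m : ℕ → ℕ) : ℕ → ℕ := conjFun (tl m)

theorem mkp_part {m : ℕ → ℕ} (h : ∃ N, ∀ i, N ≤ i → m i = 0) : IsPartitionFun (mkp m) :=
  conj_part (tl_part h)

theorem mult_mkp {m : ℕ → ℕ} (h : ∃ N, ∀ i, N ≤ i → m i = 0) (k : ℕ) :
    multiplicity' (mkp m) (k + 1) = m k := by
  have h1 := mult_eq (mkp_part h) k
  unfold mkp at *
  rw [conj_conj (tl_part h)] at h1
  have := tl_succ h k
  omega

theorem mult_pos {f : ℕ → ℕ} (hf : IsPartitionFun f) (i : ℕ) (hi : 0 < f i) :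
    0 < multiplicity' f (f i) := by
  obtain ⟨k, hk⟩ : ∃ k, f i = k + 1 := ⟨f i - 1, by omega⟩
  rw [hk]
  have := mult_eq hf k
  have h1 := lt_conj hf k i
  have h2 := lt_conj hf (k + 1) i
  omega

theorem weight_sum {f : ℕ → ℕ} (hf : IsPartitionFun f) (w : ℕ → ℕ) (hw : w 0 = 0) :
    ∑' i, w (f i) = ∑' k, multiplicity' f (k + 1) * w (k + 1) := by
  obtain ⟨N, hN⟩ := hf.2
  rw [aux_tsum _ N (fun i hi => by rw [hN i hi, hw]),
    aux_tsum _ (f 0) (fun k hk => by rw [mult_zero hf k hk, zero_mul])]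
  have h1 : ∀ k, multiplicity' f (k + 1) = ∑ i ∈ Finset.range N, if f i = k + 1 then 1 else 0 := by
    intro k
    unfold multiplicity'
    apply aux_ncard
    intro i hi
    rw [hN i hi]
    omega
  simp_rw [h1, Finset.sum_mul]
  rw [Finset.sum_comm]
  apply Finset.sum_congr rfl
  intro i _
  by_cases h0 : f i = 0
  · simp [h0, hw]
  · rw [Finset.sum_eq_single (f i - 1)]
    · rw [if_pos (by omega), one_mul, show f i - 1 + 1 = f i by omega]
    · intro b _ hb
      rw [if_neg (by omega), zero_mul]
    · intro hb
      have := hf.1 0 i (by omega)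
      simp at hb
      omega

theorem oddParts_eq {f : ℕ → ℕ} (hf : IsPartitionFun f) :
    oddParts f = ∑' k, multiplicity' f (k + 1) * ((k + 1) % 2) := by
  rw [← weight_sum hf (fun x => x % 2) rfl]
  obtain ⟨N, hN⟩ := hf.2
  rw [aux_tsum _ N (fun i hi => by simp [hN i hi])]
  unfold oddParts
  rw [aux_ncard _ N (fun i hi => by simp [hN i hi])]
  apply Finset.sum_congr rfl
  intro i _
  split_ifs with h
  · rw [Nat.odd_iff] at h; omega
  · rw [Nat.odd_iff] at h; omega

theorem numParts_eq {f : ℕ → ℕ} (hf : IsPartitionFun f) :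
    numParts f = ∑' k, multiplicity' f (k + 1) := by
  have := weight_sum hf (fun x => if 0 < x then 1 else 0) rfl
  simp only [Nat.succ_pos, if_true, mul_one] at this
  rw [← this]
  obtain ⟨N, hN⟩ := hf.2
  rw [aux_tsum _ N (fun i hi => by simp [hN i hi])]
  unfold numParts
  rw [aux_ncard _ N (fun i hi => by simp [hN i hi])]

theorem partSum_eq {f : ℕ → ℕ} (hf : IsPartitionFun f) :
    partSum f = ∑' k, multiplicity' f (k + 1) * (k + 1) :=
  weight_sum hf (fun x => x) rfl

/-- alternating sum -/
theorem oddParts_conj {f : ℕ → ℕ} (hf : IsPartitionFun f) (N : ℕ) (hN : ∀ i, 2 * N ≤ i → f i = 0) :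
    oddParts (conjFun f) = ∑ i ∈ Finset.range N, (f (2 * i) - f (2 * i + 1)) := by
  have hm : ∀ k, multiplicity' (conjFun f) (k + 1) = f k - f (k + 1) := by
    intro k
    have := mult_eq (conj_part hf) k
    rw [conj_conj hf] at this
    omega
  rw [oddParts_eq (conj_part hf)]
  simp_rw [hm]
  rw [aux_tsum _ (2 * N) (fun i hi => by simp [hN i hi]), aux_pairs]
  apply Finset.sum_congr rfl
  intro i _
  rw [show (2 * i + 1) % 2 = 1 by omega, show (2 * i + 1 + 1) % 2 = 0 by omega]
  simp

theorem abel (S c : ℕ → ℕ) (h : ∀ k, S k = c k + S (k + 1)) (n : ℕ) :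
    ∑ i ∈ Finset.range n, (S i + S (i + 1)) =
      ∑ k ∈ Finset.range n, (2 * k + 1) * c k + 2 * n * S n := by
  induction n with
  | zero => simp
  | succ n ih =>
    rw [Finset.sum_range_succ, ih, Finset.sum_range_succ, h n]
    ring

def wt (x : ℕ) : ℕ := ((x + 1) / 2) % 2 + (x / 2) % 2

def FS (m : ℕ → ℕ) : Prop := ∃ N, ∀ i, N ≤ i → m i = 0

/-- the middle set -/
def Mid (n r s : ℕ) : Set ((ℕ → ℕ) × (ℕ → ℕ)) :=
  {x | FS x.1 ∧ FS x.2 ∧ (∀ k, x.1 (2 * k) ≤ 1) ∧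
    ∑' k, x.1 k * (k + 1) + ∑' k, 2 * ((2 * k + 1) * x.2 k) = n ∧
    ∑' k, x.1 k * wt (k + 1) = r ∧
    ∑' k, x.1 k * ((k + 1) % 2) + ∑' k, 2 * x.2 k = s}

def glue (p S : ℕ → ℕ) (j : ℕ) : ℕ :=
  if j % 2 = 0 then (p (j / 2) + 1) / 2 + 2 * S (j / 2) else p (j / 2) / 2 + 2 * S (j / 2 + 1)

theorem glue_even (p S : ℕ → ℕ) (i : ℕ) : glue p S (2 * i) = (p i + 1) / 2 + 2 * S i := by
  unfold glue
  rw [if_pos (by omega), show 2 * i / 2 = i by omega]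

theorem glue_odd (p S : ℕ → ℕ) (i : ℕ) : glue p S (2 * i + 1) = p i / 2 + 2 * S (i + 1) := by
  unfold glue
  rw [if_neg (by omega), show (2 * i + 1) / 2 = i by omega]

noncomputable def Lmap (x : (ℕ → ℕ) × (ℕ → ℕ)) : ℕ → ℕ := glue (mkp x.1) (tl x.2)

theorem strict_odd {p : ℕ → ℕ} (hp : IsPartitionFun p)
    (h : ∀ k, multiplicity' p (2 * k + 1) ≤ 1) (i : ℕ) (hi : p i % 2 = 1) : p (i + 1) < p i := by
  have h1 := hp.1 i (i + 1) (by omega)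
  by_contra hc
  have h2 := h (p i / 2)
  rw [show 2 * (p i / 2) + 1 = p i by omega] at h2
  unfold multiplicity' at h2
  have hfin : {j | p j = p i}.Finite := by
    obtain ⟨N, hN⟩ := hp.2
    apply (Set.finite_Iio N).subset
    intro j hj
    simp only [Set.mem_ofPred_eq] at hj
    by_contra hc
    rw [hN j (by simpa using hc)] at hj
    omega
  rw [Set.ncard_le_one hfin] at h2
  have := h2 i rfl (i + 1) (by simp only [Set.mem_ofPred_eq]; omega)
  omega

theorem Lmap_part {e c : ℕ → ℕ} (he : FS e) (hc : FS c) (h1 : ∀ k, e (2 * k) ≤ 1) :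
    IsPartitionFun (Lmap (e, c)) := by
  have hp := mkp_part he
  have hS := tl_part hc
  have hs := strict_odd hp (fun k => by rw [mult_mkp he]; exact h1 k)
  unfold Lmap
  simp only
  generalize mkp e = p at *
  generalize tl c = S at *
  apply part_of_succ
  · intro j
    rcases Nat.even_or_odd' j with ⟨i, rfl | rfl⟩
    · rw [glue_even, glue_odd]
      have := hS.1 i (i + 1) (by omega)
      omega
    · rw [show 2 * i + 1 + 1 = 2 * (i + 1) by ring, glue_even, glue_odd]
      have h3 := hp.1 i (i + 1) (by omega)
      have h4 := hs i
      omega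
  · obtain ⟨N, hN⟩ := hp.2
    obtain ⟨M, hM⟩ := hS.2
    refine ⟨2 * (N + M), fun j hj => ?_⟩
    unfold glue
    rw [hN (j / 2) (by omega), hM (j / 2) (by omega), hM (j / 2 + 1) (by omega)]
    simp

theorem Lmap_stats {e c : ℕ → ℕ} (he : FS e) (hc : FS c) (h1 : ∀ k, e (2 * k) ≤ 1) :
    partSum (Lmap (e, c)) = ∑' k, e k * (k + 1) + ∑' k, 2 * ((2 * k + 1) * c k) ∧
    oddParts (Lmap (e, c)) = ∑' k, e k * wt (k + 1) ∧
    oddParts (conjFun (Lmap (e, c))) = ∑' k, e k * ((k + 1) % 2) + ∑' k, 2 * c k := by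
  have hL := Lmap_part he hc h1
  have hp := mkp_part he
  have hm := mult_mkp he
  have w1 := weight_sum hp (fun x => x) rfl
  have w2 := weight_sum hp wt rfl
  have w3 := weight_sum hp (fun x => x % 2) rfl
  simp only [hm] at w1 w2 w3
  rw [← w1, ← w2, ← w3]
  have hs := tl_succ hc
  obtain ⟨N1, hN1⟩ := hp.2
  obtain ⟨N2, hN2⟩ := hc
  have hN2' := tl_zero hN2
  obtain ⟨N, hNe⟩ : ∃ N, N = N1 + N2 := ⟨_, rfl⟩
  have hpN : ∀ i, N ≤ i → mkp e i = 0 := fun i hi => hN1 i (by omega)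
  have hcN : ∀ i, N ≤ i → c i = 0 := fun i hi => hN2 i (by omega)
  have hSN : ∀ i, N ≤ i → tl c i = 0 := fun i hi => hN2' i (by omega)
  have hLdef : Lmap (e, c) = glue (mkp e) (tl c) := rfl
  rw [hLdef] at hL ⊢
  generalize mkp e = p at *
  generalize tl c = S at *
  have hG : ∀ j, 2 * N ≤ j → glue p S j = 0 := by
    intro j hj
    unfold glue
    rw [hpN (j / 2) (by omega), hSN (j / 2) (by omega), hSN (j / 2 + 1) (by omega)]
    simp
  rw [aux_tsum (fun i => p i) N hpN, aux_tsum (fun i => wt (p i)) N (fun i hi => by simp [hpN i hi, wt]),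
    aux_tsum (fun i => p i % 2) N (fun i hi => by simp [hpN i hi]),
    aux_tsum (fun k => 2 * ((2 * k + 1) * c k)) N (fun i hi => by simp [hcN i hi]),
    aux_tsum (fun k => 2 * c k) N (fun i hi => by simp [hcN i hi])]
  refine ⟨?_, ?_, ?_⟩
  · unfold partSum
    rw [aux_tsum _ (2 * N) hG, aux_pairs, ← Finset.mul_sum]
    have := abel S c hs N
    rw [hSN N le_rfl, mul_zero, add_zero] at this
    rw [← this, Finset.mul_sum, ← Finset.sum_add_distrib]
    apply Finset.sum_congr rfl
    intro i _
    rw [glue_even, glue_odd]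
    omega
  · unfold oddParts
    rw [aux_ncard _ (2 * N) (fun i hi => by simp [hG i hi]), aux_pairs]
    apply Finset.sum_congr rfl
    intro i _
    rw [glue_even, glue_odd]
    unfold wt
    simp only [Nat.odd_iff]
    split_ifs <;> omega
  · rw [oddParts_conj hL N hG, ← Finset.sum_add_distrib]
    apply Finset.sum_congr rfl
    intro i _
    rw [glue_even, glue_odd]
    have := hs i
    omega

theorem Lmap_surj {f : ℕ → ℕ} (hf : IsPartitionFun f) :
    ∃ e c, FS e ∧ FS c ∧ (∀ k, e (2 * k) ≤ 1) ∧ Lmap (e, c) = f := by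
  obtain ⟨N, hN⟩ := hf.2
  let c : ℕ → ℕ := fun i => (f (2 * i) - f (2 * i + 1)) / 2
  have hcd : ∀ i, c i = (f (2 * i) - f (2 * i + 1)) / 2 := fun i => rfl
  have hcN : ∀ i, N ≤ i → c i = 0 := by
    intro i hi
    rw [hcd, hN (2 * i) (by omega)]
    simp
  have hc : FS c := ⟨N, hcN⟩
  have hs := tl_succ hc
  have hS0 := tl_zero hcN
  have hle : ∀ i, 2 * tl c i ≤ f (2 * i) := by
    have key : ∀ d i, N ≤ i + d → 2 * tl c i ≤ f (2 * i) := by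
      intro d
      induction d with
      | zero => intro i hi; rw [hS0 i (by omega)]; omega
      | succ d ih =>
        intro i hi
        have h1 := ih (i + 1) (by omega)
        have h2 := hs i
        have h3 := hcd i
        have h4 := hf.1 (2 * i) (2 * i + 1) (by omega)
        have h5 := hf.1 (2 * i + 1) (2 * (i + 1)) (by omega)
        omega
    intro i
    exact key N i (by omega)
  let p : ℕ → ℕ := fun i => f (2 * i) + f (2 * i + 1) - 2 * tl c i - 2 * tl c (i + 1)
  have hpd : ∀ i, p i = f (2 * i) + f (2 * i + 1) - 2 * tl c i - 2 * tl c (i + 1) := fun i => rfl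
  have hstep : ∀ i, p (i + 1) ≤ p i ∧ (p i % 2 = 1 → p (i + 1) < p i) ∧
      f (2 * i) = (p i + 1) / 2 + 2 * tl c i ∧ f (2 * i + 1) = p i / 2 + 2 * tl c (i + 1) := by
    intro i
    have h0 := hcd i
    have h0' := hcd (i + 1)
    have h1 := hpd i
    have h2 := hpd (i + 1)
    have h3 := hle i
    have h4 := hle (i + 1)
    have h5 := hle (i + 2)
    have h6 := hs i
    have h7 := hs (i + 1)
    have h8 := hf.1 (2 * i) (2 * i + 1) (by omega)
    have h9 := hf.1 (2 * i + 1) (2 * (i + 1)) (by omega)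
    have h10 := hf.1 (2 * (i + 1)) (2 * (i + 1) + 1) (by omega)
    have h11 := hf.1 (2 * (i + 1) + 1) (2 * (i + 2)) (by omega)
    rw [show i + 1 + 1 = i + 2 by ring] at *
    generalize p i = p0 at *
    generalize p (i + 1) = p1 at *
    omega
  have hp : IsPartitionFun p := by
    apply part_of_succ (fun i => (hstep i).1)
    refine ⟨N, fun i hi => ?_⟩
    rw [hpd, hN (2 * i) (by omega), hN (2 * i + 1) (by omega)]
    simp
  have he : FS (fun k => multiplicity' p (k + 1)) := ⟨p 0, mult_zero hp⟩
  have hpe : mkp (fun k => multiplicity' p (k + 1)) = p :=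
    part_ext (mkp_part he) hp (fun k => mult_mkp he k)
  refine ⟨fun k => multiplicity' p (k + 1), c, he, hc, ?_, ?_⟩
  · intro k
    unfold multiplicity'
    have hlt : ∀ i j, i < j → p i = 2 * k + 1 → p j ≠ 2 * k + 1 := by
      intro i j hij hi hj
      have h3 := (hstep i).2.1 (by omega)
      have h4 := hp.1 (i + 1) j hij
      omega
    have hsub : {i | p i = 2 * k + 1}.Subsingleton := by
      intro i hi j hj
      rcases lt_trichotomy i j with h | h | h
      · exact absurd hj (hlt i j h hi)
      · exact h
      · exact absurd hi (hlt j i h hj)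
    exact (Set.ncard_le_one hsub.finite).2 (fun a ha b hb => hsub ha hb)
  · unfold Lmap
    simp only [hpe]
    funext j
    rcases Nat.even_or_odd' j with ⟨i, rfl | rfl⟩
    · rw [glue_even, (hstep i).2.2.1]
    · rw [glue_odd, (hstep i).2.2.2]

theorem Lmap_inj {e c e' c' : ℕ → ℕ} (he : FS e) (hc : FS c) 
    (he' : FS e') (hc' : FS c') (h : Lmap (e, c) = Lmap (e', c')) : e = e' ∧ c = c' := by
  have hL : ∀ e c, Lmap (e, c) = glue (mkp e) (tl c) := fun _ _ => rfl
  rw [hL, hL] at h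
  have hs := tl_succ hc
  have hs' := tl_succ hc'
  have hE : ∀ i, (mkp e i + 1) / 2 + 2 * tl c i = (mkp e' i + 1) / 2 + 2 * tl c' i := by
    intro i
    rw [← glue_even, h, glue_even]
  have hO : ∀ i, mkp e i / 2 + 2 * tl c (i + 1) = mkp e' i / 2 + 2 * tl c' (i + 1) := by
    intro i
    rw [← glue_odd, h, glue_odd]
  have hcc : c = c' := by
    funext i
    have h1 := hE i
    have h2 := hO i
    have h3 := hs i
    have h4 := hs' i
    omega
  subst hcc
  refine ⟨?_, rfl⟩
  have hpp : mkp e = mkp e' := by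
    funext i
    have h1 := hE i
    have h2 := hO i
    omega
  funext k
  rw [← mult_mkp he, hpp, mult_mkp he']

theorem left_card (n r s : ℕ) :
    (Mid n r s).ncard = {f : ℕ → ℕ | IsPartitionFun f ∧ partSum f = n ∧ oddParts f = r ∧
        oddParts (conjFun f) = s}.ncard := by
  apply Set.ncard_congr (fun x _ => Lmap x)
  · rintro ⟨e, c⟩ ⟨he, hc, h1, h2, h3, h4⟩
    obtain ⟨s1, s2, s3⟩ := Lmap_stats he hc h1
    exact ⟨Lmap_part he hc h1, s1.trans h2, s2.trans h3, s3.trans h4⟩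
  · rintro ⟨e, c⟩ ⟨e', c'⟩ ⟨he, hc, -⟩ ⟨he', hc', -⟩ h
    obtain ⟨rfl, rfl⟩ := Lmap_inj he hc he' hc' h
    rfl
  · rintro f ⟨hf, h2, h3, h4⟩
    obtain ⟨e, c, he, hc, h1, rfl⟩ := Lmap_surj hf
    obtain ⟨s1, s2, s3⟩ := Lmap_stats he hc h1
    exact ⟨(e, c), ⟨he, hc, h1, s1.symm.trans h2, s2.symm.trans h3, s3.symm.trans h4⟩, rfl⟩

/-! Right side -/

def nuM (e : ℕ → ℕ) (k : ℕ) : ℕ := if k % 4 = 3 then e k else 0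
def siM (e : ℕ → ℕ) (k : ℕ) : ℕ := if k % 4 = 1 then e k else 0
def taM (e c : ℕ → ℕ) (k : ℕ) : ℕ := if k % 2 = 0 then 2 * c (k / 2) + e k else 0

noncomputable def Rmap (x : (ℕ → ℕ) × (ℕ → ℕ)) : (ℕ → ℕ) × (ℕ → ℕ) × (ℕ → ℕ) :=
  (mkp (nuM x.1), mkp (siM x.1), mkp (taM x.1 x.2))

def RSet (n r s : ℕ) : Set ((ℕ → ℕ) × (ℕ → ℕ) × (ℕ → ℕ)) :=
    {t : (ℕ → ℕ) × (ℕ → ℕ) × (ℕ → ℕ) |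
        IsPartitionFun t.1 ∧ IsPartitionFun t.2.1 ∧ IsPartitionFun t.2.2 ∧
        (∀ i, 0 < t.1 i → 4 ∣ t.1 i) ∧
        (∀ i, 0 < t.2.1 i → t.2.1 i % 4 = 2) ∧
        (∀ i, 0 < t.2.2 i → Odd (t.2.2 i)) ∧
        partSum t.1 + partSum t.2.1 + partSum t.2.2 = n ∧
        numParts t.2.2 = s ∧
        2 * numParts t.2.1
          + {k : ℕ | 0 < k ∧ Odd (multiplicity' t.2.2 k)}.ncard = r}

theorem FS_nu {e : ℕ → ℕ} (he : FS e) : FS (nuM e) := by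
  obtain ⟨N, hN⟩ := he
  exact ⟨N, fun i hi => by simp [nuM, hN i hi]⟩

theorem FS_si {e : ℕ → ℕ} (he : FS e) : FS (siM e) := by
  obtain ⟨N, hN⟩ := he
  exact ⟨N, fun i hi => by simp [siM, hN i hi]⟩

theorem FS_ta {e c : ℕ → ℕ} (he : FS e) (hc : FS c) : FS (taM e c) := by
  obtain ⟨N, hN⟩ := he
  obtain ⟨M, hM⟩ := hc
  exact ⟨N + 2 * M, fun i hi => by simp [taM, hN i (by omega), hM (i / 2) (by omega)]⟩

theorem mkp_parts {m : ℕ → ℕ} (hm : FS m) (P : ℕ → Prop) (h : ∀ k, m k ≠ 0 → P (k + 1))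
    (i : ℕ) (hi : 0 < mkp m i) : P (mkp m i) := by
  have h1 := mult_pos (mkp_part hm) i hi
  obtain ⟨k, hk⟩ : ∃ k, mkp m i = k + 1 := ⟨mkp m i - 1, by omega⟩
  rw [hk, mult_mkp hm] at h1
  rw [hk]
  exact h k (by omega)

theorem Rmap_stats {e c : ℕ → ℕ} (he : FS e) (hc : FS c) (h1 : ∀ k, e (2 * k) ≤ 1) :
    partSum (mkp (nuM e)) + partSum (mkp (siM e)) + partSum (mkp (taM e c)) =
      ∑' k, e k * (k + 1) + ∑' k, 2 * ((2 * k + 1) * c k) ∧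
    2 * numParts (mkp (siM e))
          + {k : ℕ | 0 < k ∧ Odd (multiplicity' (mkp (taM e c)) k)}.ncard
      = ∑' k, e k * wt (k + 1) ∧
    numParts (mkp (taM e c)) = ∑' k, e k * ((k + 1) % 2) + ∑' k, 2 * c k := by
  have hset : {k : ℕ | 0 < k ∧ Odd (multiplicity' (mkp (taM e c)) k)}.ncard =
      {k : ℕ | Odd (taM e c k)}.ncard := by
    rw [← Set.ncard_image_of_injective {k : ℕ | Odd (taM e c k)} Nat.succ_injective]
    congr 1
    ext k
    simp only [Set.mem_ofPred_eq, Set.mem_image]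
    constructor
    · rintro ⟨h, h'⟩
      refine ⟨k - 1, ?_, by omega⟩
      rw [← mult_mkp (FS_ta he hc), show k - 1 + 1 = k by omega]
      exact h'
    · rintro ⟨j, hj, rfl⟩
      refine ⟨by omega, ?_⟩
      rw [Nat.succ_eq_add_one, mult_mkp (FS_ta he hc)]
      exact hj
  rw [hset, partSum_eq (mkp_part (FS_nu he)), partSum_eq (mkp_part (FS_si he)),
    partSum_eq (mkp_part (FS_ta he hc)), numParts_eq (mkp_part (FS_si he)),
    numParts_eq (mkp_part (FS_ta he hc))]
  simp only [mult_mkp (FS_nu he), mult_mkp (FS_si he), mult_mkp (FS_ta he hc)]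
  obtain ⟨N1, hN1⟩ := he
  obtain ⟨N2, hN2⟩ := hc
  obtain ⟨N, hNe⟩ : ∃ N, N = N1 + N2 := ⟨_, rfl⟩
  have heN : ∀ i, 2 * N ≤ i → e i = 0 := fun i hi => hN1 i (by omega)
  have hcN : ∀ i, N ≤ i → c i = 0 := fun i hi => hN2 i (by omega)
  have hn : ∀ i, 2 * N ≤ i → nuM e i = 0 := fun i hi => by simp [nuM, heN i hi]
  have hs : ∀ i, 2 * N ≤ i → siM e i = 0 := fun i hi => by simp [siM, heN i hi]
  have ht : ∀ i, 2 * N ≤ i → taM e c i = 0 := fun i hi => by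
    simp [taM, heN i hi, hcN (i / 2) (by omega)]
  rw [aux_tsum (fun k => nuM e k * (k + 1)) (2 * N) (fun i hi => by simp [hn i hi]),
    aux_tsum (fun k => siM e k * (k + 1)) (2 * N) (fun i hi => by simp [hs i hi]),
    aux_tsum (fun k => taM e c k * (k + 1)) (2 * N) (fun i hi => by simp [ht i hi]),
    aux_tsum (fun k => siM e k) (2 * N) hs,
    aux_tsum (fun k => taM e c k) (2 * N) ht,
    aux_tsum (fun k => e k * (k + 1)) (2 * N) (fun i hi => by simp [heN i hi]),
    aux_tsum (fun k => e k * wt (k + 1)) (2 * N) (fun i hi => by simp [heN i hi]),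
    aux_tsum (fun k => e k * ((k + 1) % 2)) (2 * N) (fun i hi => by simp [heN i hi]),
    aux_tsum (fun k => 2 * ((2 * k + 1) * c k)) N (fun i hi => by simp [hcN i hi]),
    aux_tsum (fun k => 2 * c k) N (fun i hi => by simp [hcN i hi]),
    aux_ncard _ (2 * N) (fun i hi => by simp [ht i hi])]
  refine ⟨?_, ?_, ?_⟩
  · simp only [aux_pairs, ← Finset.sum_add_distrib]
    apply Finset.sum_congr rfl
    intro i _
    simp only [nuM, siM, taM]
    rw [if_neg (show ¬ (2 * i) % 4 = 3 by omega), if_neg (show ¬ (2 * i) % 4 = 1 by omega),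
      if_pos (show (2 * i) % 2 = 0 by omega), if_neg (show ¬ (2 * i + 1) % 2 = 0 by omega),
      show 2 * i / 2 = i by omega]
    rcases (show (2 * i + 1) % 4 = 1 ∨ (2 * i + 1) % 4 = 3 by omega) with h | h
    · rw [h]; simp; ring
    · rw [h]; simp; ring
  · rw [Finset.mul_sum, ← Finset.sum_add_distrib]
    apply Finset.sum_congr rfl
    intro k _
    simp only [siM, taM, wt, Nat.odd_iff]
    have h2 := h1 (k / 2)
    rcases (show k % 4 = 0 ∨ k % 4 = 1 ∨ k % 4 = 2 ∨ k % 4 = 3 by omega) with h | h | h | h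
    · rw [show 2 * (k / 2) = k by omega] at h2
      rw [show ((k + 1 + 1) / 2) % 2 = 1 by omega, show ((k + 1) / 2) % 2 = 0 by omega]
      split_ifs <;> omega
    · rw [show ((k + 1 + 1) / 2) % 2 = 1 by omega, show ((k + 1) / 2) % 2 = 1 by omega]
      split_ifs <;> first | omega | contradiction
    · rw [show 2 * (k / 2) = k by omega] at h2
      rw [show ((k + 1 + 1) / 2) % 2 = 0 by omega, show ((k + 1) / 2) % 2 = 1 by omega]
      split_ifs <;> omega
    · rw [show ((k + 1 + 1) / 2) % 2 = 0 by omega, show ((k + 1) / 2) % 2 = 0 by omega]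
      split_ifs <;> omega
  · simp only [aux_pairs, ← Finset.sum_add_distrib]
    apply Finset.sum_congr rfl
    intro i _
    simp only [taM]
    rw [if_pos (show (2 * i) % 2 = 0 by omega), if_neg (show ¬ (2 * i + 1) % 2 = 0 by omega),
      show 2 * i / 2 = i by omega, show (2 * i + 1) % 2 = 1 by omega,
      show (2 * i + 1 + 1) % 2 = 0 by omega]
    ring

theorem Rmap_surj {a b t : ℕ → ℕ} (ha : IsPartitionFun a) (hb : IsPartitionFun b)
    (ht : IsPartitionFun t) (ha4 : ∀ i, 0 < a i → 4 ∣ a i) (hb4 : ∀ i, 0 < b i → b i % 4 = 2)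
    (ht2 : ∀ i, 0 < t i → Odd (t i)) :
    ∃ e c, FS e ∧ FS c ∧ (∀ k, e (2 * k) ≤ 1) ∧
      mkp (nuM e) = a ∧ mkp (siM e) = b ∧ mkp (taM e c) = t := by
  let e : ℕ → ℕ := fun k => if k % 4 = 3 then multiplicity' a (k + 1) else
    if k % 4 = 1 then multiplicity' b (k + 1) else multiplicity' t (k + 1) % 2
  let c : ℕ → ℕ := fun k => multiplicity' t (2 * k + 1) / 2
  have hed : ∀ k, e k = if k % 4 = 3 then multiplicity' a (k + 1) else
    if k % 4 = 1 then multiplicity' b (k + 1) else multiplicity' t (k + 1) % 2 := fun k => rfl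
  have hcd : ∀ k, c k = multiplicity' t (2 * k + 1) / 2 := fun k => rfl
  have he : FS e := by
    refine ⟨a 0 + b 0 + t 0, fun k hk => ?_⟩
    rw [hed, mult_zero ha k (by omega), mult_zero hb k (by omega), mult_zero ht k (by omega)]
    simp
  have hc : FS c := by
    refine ⟨t 0, fun k hk => ?_⟩
    rw [hcd, mult_zero ht (2 * k) (by omega)]
  refine ⟨e, c, he, hc, ?_, ?_, ?_, ?_⟩
  · intro k
    rw [hed, if_neg (by omega), if_neg (by omega)]
    omega
  · apply part_ext (mkp_part (FS_nu he)) ha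
    intro k
    rw [mult_mkp (FS_nu he)]
    unfold nuM
    split_ifs with h
    · rw [hed, if_pos h]
    · rw [mult_of_none]
      intro i hi
      have := ha4 i (by omega)
      omega
  · apply part_ext (mkp_part (FS_si he)) hb
    intro k
    rw [mult_mkp (FS_si he)]
    unfold siM
    split_ifs with h
    · rw [hed, if_neg (by omega), if_pos h]
    · rw [mult_of_none]
      intro i hi
      have := hb4 i (by omega)
      omega
  · apply part_ext (mkp_part (FS_ta he hc)) ht
    intro k
    rw [mult_mkp (FS_ta he hc)]
    unfold taM
    split_ifs with h
    · rw [hed, if_neg (by omega), if_neg (by omega), hcd, show 2 * (k / 2) = k by omega]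
      omega
    · rw [mult_of_none]
      intro i hi
      have := ht2 i (by omega)
      rw [Nat.odd_iff] at this
      omega

theorem Rmap_inj {e c e' c' : ℕ → ℕ} (he : FS e) (hc : FS c) (he' : FS e') (hc' : FS c')
    (h1 : ∀ k, e (2 * k) ≤ 1) (h1' : ∀ k, e' (2 * k) ≤ 1)
    (ha : mkp (nuM e) = mkp (nuM e')) (hb : mkp (siM e) = mkp (siM e'))
    (ht : mkp (taM e c) = mkp (taM e' c')) : e = e' ∧ c = c' := by
  have ha' : ∀ k, nuM e k = nuM e' k := fun k => by
    rw [← mult_mkp (FS_nu he), ha, mult_mkp (FS_nu he')]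
  have hb' : ∀ k, siM e k = siM e' k := fun k => by
    rw [← mult_mkp (FS_si he), hb, mult_mkp (FS_si he')]
  have ht' : ∀ k, taM e c k = taM e' c' k := fun k => by
    rw [← mult_mkp (FS_ta he hc), ht, mult_mkp (FS_ta he' hc')]
  have h2 : ∀ k, e (2 * k) = e' (2 * k) ∧ c k = c' k := by
    intro k
    have h3 := ht' (2 * k)
    simp only [taM] at h3
    rw [if_pos (by omega), if_pos (by omega), show 2 * k / 2 = k by omega] at h3
    have h4 := h1 k
    have h5 := h1' k
    omega
  refine ⟨?_, funext fun k => (h2 k).2⟩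
  funext k
  rcases (show k % 2 = 0 ∨ k % 4 = 1 ∨ k % 4 = 3 by omega) with h | h | h
  · have := (h2 (k / 2)).1
    rwa [show 2 * (k / 2) = k by omega] at this
  · have := hb' k
    simpa only [siM, if_pos h] using this
  · have := ha' k
    simpa only [nuM, if_pos h] using this

theorem right_card (n r s : ℕ) : (Mid n r s).ncard = (RSet n r s).ncard := by
  apply Set.ncard_congr (fun x _ => Rmap x)
  · rintro ⟨e, c⟩ ⟨he, hc, h1, h2, h3, h4⟩
    obtain ⟨s1, s2, s3⟩ := Rmap_stats he hc h1
    refine ⟨mkp_part (FS_nu he), mkp_part (FS_si he), mkp_part (FS_ta he hc), ?_, ?_, ?_,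
      s1.trans h2, s3.trans h4, s2.trans h3⟩
    · apply mkp_parts (FS_nu he) (fun x => 4 ∣ x)
      intro k hk
      unfold nuM at hk
      split_ifs at hk <;> omega
    · apply mkp_parts (FS_si he) (fun x => x % 4 = 2)
      intro k hk
      unfold siM at hk
      split_ifs at hk <;> omega
    · apply mkp_parts (FS_ta he hc) (fun x => Odd x)
      intro k hk
      rw [Nat.odd_iff]
      unfold taM at hk
      split_ifs at hk <;> omega
  · rintro ⟨e, c⟩ ⟨e', c'⟩ ⟨he, hc, h1, -⟩ ⟨he', hc', h1', -⟩ h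
    simp only [Rmap, Prod.mk.injEq] at h
    obtain ⟨rfl, rfl⟩ := Rmap_inj he hc he' hc' h1 h1' h.1 h.2.1 h.2.2
    rfl
  · rintro ⟨a, b, t⟩ ⟨ha, hb, ht, ha4, hb4, ht2, h2, h4, h3⟩
    obtain ⟨e, c, he, hc, h1, rfl, rfl, rfl⟩ := Rmap_surj ha hb ht ha4 hb4 ht2
    obtain ⟨s1, s2, s3⟩ := Rmap_stats he hc h1
    exact ⟨(e, c), ⟨he, hc, h1, s1.symm.trans h2, s2.symm.trans h3, s3.symm.trans h4⟩, rfl⟩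

/-- For all `n, r, s`, the number of partitions `π` of `n` with exactly `r` odd parts
whose conjugate has exactly `s` odd parts equals the number of triples `(ν, σ, τ)`
where `ν` is a partition into parts divisible by 4, `σ` is a partition into parts
`≡ 2 (mod 4)`, `τ` is a partition into odd parts, the sizes of `ν, σ, τ` sum to `n`,
`τ` has exactly `s` parts, and twice the number of parts of `σ` plus the number of
distinct integers occurring in `τ` with odd multiplicity equals `r`. -/
theorem stanley_partition_triple_identity (n r s : ℕ) :
    {f : ℕ → ℕ | IsPartitionFun f ∧ partSum f = n ∧ oddParts f = r ∧
        oddParts (conjFun f) = s}.ncard =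
    {t : (ℕ → ℕ) × (ℕ → ℕ) × (ℕ → ℕ) |
        IsPartitionFun t.1 ∧ IsPartitionFun t.2.1 ∧ IsPartitionFun t.2.2 ∧
        (∀ i, 0 < t.1 i → 4 ∣ t.1 i) ∧
        (∀ i, 0 < t.2.1 i → t.2.1 i % 4 = 2) ∧
        (∀ i, 0 < t.2.2 i → Odd (t.2.2 i)) ∧
        partSum t.1 + partSum t.2.1 + partSum t.2.2 = n ∧
        numParts t.2.2 = s ∧
        2 * numParts t.2.1
          + {k : ℕ | 0 < k ∧ Odd (multiplicity' t.2.2 k)}.ncard = r}.ncard := by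
  exact (left_card n r s).symm.trans (right_card n r s)
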